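/- arXiv:2502.14879 — 4 statements merged into one kernel-verified Lean document; each statement's English description precedes it below -/
import Mathlib

section
/- Let ▷ be a strict linear order on a finite nonempty set X. For a choice function c on X the following are equivalent: (i) there is a strict partial order > on X such that (>,▷) describes c as a shortlisting; (ii) there is an optimal attention filter Γ such that (Γ,▷) is an explanation by optimal limited attention of c. -/
open Finset

variable {X : Type*} [DecidableEq X]

/-- `a` is the `r`-greatest element among those satisfying `P`. -/
def IsRMax (r : X → X → Prop) (P : X → Prop) (a : X) : Prop :=
  P a ∧ ∀ y, P y → y ≠ a → r a y

/-- `a` is the `r`-least element among those satisfying `P`. -/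
def IsRMin (r : X → X → Prop) (P : X → Prop) (a : X) : Prop :=
  P a ∧ ∀ y, P y → y ≠ a → r y a

def Asym (r : X → X → Prop) : Prop := ∀ x y, r x y → ¬ r y x

def StrictPartial (r : X → X → Prop) : Prop :=
  Asym r ∧ ∀ x y z, r x y → r y z → r x z

def StrictLinear (r : X → X → Prop) : Prop :=
  StrictPartial r ∧ ∀ x y : X, x ≠ y → r x y ∨ r y x

/-- No cycle `x₁ ≻ x₂ ≻ … ≻ xₙ ≻ x₁` with `n ≥ 3`. -/
def Acyclic (r : X → X → Prop) : Prop :=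
  ¬ ∃ (n : ℕ) (f : ℕ → X), 3 ≤ n ∧ (∀ i, i + 1 < n → r (f i) (f (i + 1))) ∧
    r (f (n - 1)) (f 0)

def ChoiceFun (c : Finset X → X) : Prop :=
  ∀ A : Finset X, A.Nonempty → c A ∈ A

def ChoiceCorr (Γ : Finset X → Finset X) : Prop :=
  ∀ A : Finset X, A.Nonempty → (Γ A).Nonempty ∧ Γ A ⊆ A

/-- `x ∈ max(A, r)`: `x` is in `A` and is undominated in `A` w.r.t. `r`. -/
def MaxOf (r : X → X → Prop) (A : Finset X) (x : X) : Prop :=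
  x ∈ A ∧ ∀ y ∈ A, ¬ r y x

/-- The pair `(gt, rhd)` describes `c` as a shortlisting. -/
def Describes (gt rhd : X → X → Prop) (c : Finset X → X) : Prop :=
  StrictPartial gt ∧ StrictLinear rhd ∧
    ∀ A : Finset X, A.Nonempty → IsRMax rhd (MaxOf gt A) (c A)

def Shortlisting (c : Finset X → X) : Prop :=
  ∃ gt rhd : X → X → Prop, Describes gt rhd c

/-- Optimal attention filter. -/
def OptimalFilter (Γ : Finset X → Finset X) : Prop :=
  ChoiceCorr Γ ∧
  (∀ B : Finset X, B.Nonempty → ∀ x ∈ B, x ∉ Γ B → Γ (B.erase x) ⊆ Γ B) ∧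
  (∀ B : Finset X, B.Nonempty → ∀ x ∈ B, ∀ y : X,
    y ∈ Γ {x, y} → y ∈ Γ (B.erase x) → y ∈ Γ B) ∧
  (∀ B : Finset X, B.Nonempty → ∀ x ∈ B, (B.erase x).Nonempty →
    (Γ B).erase x ⊆ Γ (B.erase x))

/-- `(Γ, rhd)` is an explanation by optimal limited attention of `c`. -/
def ExplByOLA (Γ : Finset X → Finset X) (rhd : X → X → Prop) (c : Finset X → X) : Prop :=
  OptimalFilter Γ ∧ StrictLinear rhd ∧
    ∀ A : Finset X, A.Nonempty → IsRMax rhd (· ∈ Γ A) (c A)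

/-- Choice with optimal limited attention. -/
def COLA (c : Finset X → X) : Prop :=
  ∃ (Γ : Finset X → Finset X) (rhd : X → X → Prop), ExplByOLA Γ rhd c

/-- Salient attention filter relative to `rhd`. -/
def SalientFilter (rhd : X → X → Prop) (Γ : Finset X → Finset X) : Prop :=
  ChoiceCorr Γ ∧
  ∀ B : Finset X, B.Nonempty → ∀ x ∈ B,
    ¬ IsRMin rhd (· ∈ B) x → ¬ IsRMax rhd (· ∈ Γ B) x →
      (Γ B).erase x = Γ (B.erase x)

/-- `(Γ, rhd)` is an explanation by salient limited attention of `c`. -/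
def ExplBySLA (Γ : Finset X → Finset X) (rhd : X → X → Prop) (c : Finset X → X) : Prop :=
  StrictLinear rhd ∧ SalientFilter rhd Γ ∧
    ∀ A : Finset X, A.Nonempty → IsRMax rhd (· ∈ Γ A) (c A)

/-- Choice with salient limited attention. -/
def CSLA (c : Finset X → X) : Prop :=
  ∃ (Γ : Finset X → Finset X) (rhd : X → X → Prop), ExplBySLA Γ rhd c

/-- Selective salient attention filter relative to `rhd`. -/
def SelectiveFilter (rhd : X → X → Prop) (Γ : Finset X → Finset X) : Prop :=
  ChoiceCorr Γ ∧
  ∀ B : Finset X, B.Nonempty → ∀ x ∈ B,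
    ¬ IsRMax rhd (· ∈ Γ B) x → (Γ B).erase x = Γ (B.erase x)

/-- Choice with selective salient limited attention. -/
def CSSLA (c : Finset X → X) : Prop :=
  ∃ (Γ : Finset X → Finset X) (rhd : X → X → Prop),
    StrictLinear rhd ∧ SelectiveFilter rhd Γ ∧
      ∀ A : Finset X, A.Nonempty → IsRMax rhd (· ∈ Γ A) (c A)

def Rationalizable (c : Finset X → X) : Prop :=
  ∃ rhd : X → X → Prop, StrictLinear rhd ∧
    ∀ A : Finset X, A.Nonempty → IsRMax rhd (· ∈ A) (c A)

/-- Competitive attention filter relative to `rhd`. -/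
def CompetitiveFilter (rhd : X → X → Prop) (Γ : Finset X → Finset X) : Prop :=
  ChoiceCorr Γ ∧
  (∀ A : Finset X, A.Nonempty → ∀ x ∈ A, x ∉ Γ A → Γ A = Γ (A.erase x)) ∧
  (∀ A : Finset X, 1 < A.card → ∀ x y : X,
    IsRMax rhd (· ∈ A) y → IsRMax rhd (· ∈ Γ (A.erase y)) x →
      (y ∈ Γ {x, y} ↔ y ∈ Γ A))

/-- `(Γ, rhd)` is an explanation by competitive limited attention of `c`. -/
def ExplByCCLA (Γ : Finset X → Finset X) (rhd : X → X → Prop) (c : Finset X → X) : Prop :=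
  StrictLinear rhd ∧ CompetitiveFilter rhd Γ ∧
    ∀ A : Finset X, A.Nonempty → IsRMax rhd (· ∈ Γ A) (c A)

/-- Choice with competitive limited attention. -/
def CCLA (c : Finset X → X) : Prop :=
  ∃ (Γ : Finset X → Finset X) (rhd : X → X → Prop), ExplByCCLA Γ rhd c

/-- The list `f` list rationalizes `c`. -/
def ListRationalizes (f : X → X → Prop) (c : Finset X → X) : Prop :=
  StrictLinear f ∧
    ∀ A : Finset X, 1 < A.card → ∀ l : X, IsRMax f (· ∈ A) l →
      c A = c {c (A.erase l), l}

def ListRational (c : Finset X → X) : Prop :=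
  ∃ f : X → X → Prop, ListRationalizes f c

/-- `(u, v, W)` is a general-temptation representation of `c`. -/
def GTRrep (c : Finset X → X) (u v : X → ℝ) (W : ℝ → ℝ → ℝ) : Prop :=
  (∀ r s : ℝ, 0 ≤ W r s) ∧
  (∀ r₁ r₂ s : ℝ, r₁ < r₂ → W r₁ s < W r₂ s) ∧
  (∀ r s₁ s₂ : ℝ, s₁ < s₂ → W r s₁ < W r s₂) ∧
  ∀ (A : Finset X) (hA : A.Nonempty),
    c A ∈ A ∧ ∀ x ∈ A, x ≠ c A →
      W (u x) (v x - A.sup' hA v) < W (u (c A)) (v (c A) - A.sup' hA v)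

def HasGTR (c : Finset X → X) : Prop :=
  ∃ (u v : X → ℝ) (W : ℝ → ℝ → ℝ), GTRrep c u v W

/-- `(gg, U)` is a conspicuity based endogenous reference representation of `c`. -/
def CERrep (c : Finset X → X) (gg : X → X → Prop) (U : X → X → ℝ) : Prop :=
  StrictLinear gg ∧ (∀ z : X, Function.Injective (U z)) ∧
  ∀ A : Finset X, A.Nonempty → ∀ m : X, IsRMax gg (· ∈ A) m →
    c A ∈ A ∧ ∀ x ∈ A, x ≠ c A → U m x < U m (c A)

def HasCER (c : Finset X → X) : Prop :=
  ∃ (gg : X → X → Prop) (U : X → X → ℝ), CERrep c gg U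

/-- `(A, B)` is a switch of `c`. -/
def Switch (c : Finset X → X) (A B : Finset X) : Prop :=
  A.Nonempty ∧ A ⊆ B ∧ c B ∈ A ∧ c A ≠ c B

/-- Revealed salience: `x ⊨_c y`. -/
def RevSal (c : Finset X → X) (x y : X) : Prop :=
  ∃ A : Finset X, x ∈ A ∧ y ∈ A ∧ x ≠ c A ∧ c (A.erase x) ≠ c A

/-- Axiom of Revealed Temptation. -/
def ART (c : Finset X → X) : Prop :=
  ∀ B : Finset X, B.Nonempty → ∃ x ∈ B,
    ∀ B' B'' : Finset X, x ∈ B' → B' ⊂ B'' → B'' ⊆ B → ¬ Switch c B' B''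

/-- The revealed relation `R^c`. -/
def Rrel (c : Finset X → X) (x y : X) : Prop :=
  (∃ A : Finset X, A.Nonempty ∧ x = c (insert y A) ∧ x ≠ c A) ∨
  (∃ A : Finset X, A.Nonempty ∧ y = c (insert x A) ∧ x = c {x, y}) ∨
  (∃ A : Finset X, A.Nonempty ∧ y ≠ c (insert x A) ∧ y = c {x, y} ∧ y = c A)

/-- The revealed-to-follow relation `F_c`. -/
def Frel (c : Finset X → X) (x y : X) : Prop :=
  (∃ A : Finset X, A.Nonempty ∧ x = c (insert y A) ∧ y = c {x, y}) ∨
  (∃ A : Finset X, A.Nonempty ∧ x = c (insert y A) ∧ x ≠ c A) ∨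
  (∃ A : Finset X, A.Nonempty ∧ x ≠ c (insert y A) ∧ x = c {x, y} ∧ x = c A)

/-!
On nonempty menus, the optimal attention filters are exactly the correspondences `A ↦ max(A, >)`
with `>` a strict partial order. Writing (a), (b), (c) for the three closure conditions of
`OptimalFilter`, in the order listed there, `max(·, >)` clearly satisfies (b) and (c), and it
satisfies (a) because, by transitivity, whatever dominates `x` also dominates everything that `x`
dominates.

Conversely, a filter `Γ` is determined by its values on pairs: by (c) attention passes to submenus,
and by (b) an element attended to against each rival separately is attended to against all of them
together. Hence `Γ A = max(A, >)` where `x > y` means `y ∉ Γ {x, y}`. This `>` is transitive: if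
`x > y > z`, then neither `y` nor `z` is in `Γ {x, y, z}`, and by (a) the ignored `y` can be
removed, so `z ∉ Γ {x, z}`.
-/

section Maximal

variable {α : Type*} {r : α → α → Prop}

lemma StrictPartial.exists_maxOf (hr : StrictPartial r) {A : Finset α} (hA : A.Nonempty) :
    ∃ x, MaxOf r A x := by
  have : IsStrictOrder α r := { irrefl := fun x hx => hr.1 x x hx hx, trans := hr.2 }
  obtain ⟨a, ha⟩ := hA
  obtain ⟨x, -, hx⟩ := (A.wellFoundedOn (r := r)).has_min Set.univ ⟨⟨a, ha⟩, trivial⟩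
  exact ⟨x, x.2, fun y hy => hx ⟨y, hy⟩ trivial⟩

lemma MaxOf.mono {A B : Finset α} {y : α} (hy : MaxOf r B y) (hAB : A ⊆ B) (hyA : y ∈ A) :
    MaxOf r A y :=
  ⟨hyA, fun z hz => hy.2 z (hAB hz)⟩

lemma MaxOf.of_erase [DecidableEq α] {B : Finset α} {x y : α}
    (hy : MaxOf r (B.erase x) y) (hxy : ¬ r x y) : MaxOf r B y := by
  refine ⟨mem_of_mem_erase hy.1, fun z hz hzy => ?_⟩
  obtain rfl | hzx := eq_or_ne z x
  · exact hxy hzy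
  · exact hy.2 z (mem_erase_of_ne_of_mem hzx hz) hzy

lemma StrictPartial.maxOf_of_erase [DecidableEq α] (hr : StrictPartial r) {B : Finset α}
    {x y : α} (hxB : x ∈ B) (hx : ¬ MaxOf r B x) (hy : MaxOf r (B.erase x) y) :
    MaxOf r B y := by
  obtain ⟨z, hzB, hzx⟩ : ∃ z ∈ B, r z x := by simpa [MaxOf, hxB] using hx
  have hne : z ≠ x := by
    rintro rfl
    exact hr.1 z z hzx hzx
  exact hy.of_erase fun hxy => hy.2 z (mem_erase_of_ne_of_mem hne hzB) (hr.2 z x y hzx hxy)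

open Classical in
/-- The correspondence `A ↦ max(A, r)`, that is, `MaxOf r` as a map of menus into finsets. -/
noncomputable def maxCorr (r : α → α → Prop) (A : Finset α) : Finset α :=
  A.filter (MaxOf r A)

lemma mem_maxCorr {A : Finset α} {x : α} : x ∈ maxCorr r A ↔ MaxOf r A x := by
  simp only [maxCorr, mem_filter, and_iff_right_iff_imp]
  exact And.left

lemma StrictPartial.optimalFilter_maxCorr [DecidableEq α] (hr : StrictPartial r) :
    OptimalFilter (maxCorr r) := by
  simp only [OptimalFilter, ChoiceCorr, Finset.Nonempty, subset_iff, mem_maxCorr, mem_erase]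
  refine ⟨fun A hA => ⟨hr.exists_maxOf hA, fun _ hx => hx.1⟩, ?_, ?_, ?_⟩
  · exact fun B _ x hxB hx y hy => hr.maxOf_of_erase hxB hx hy
  · exact fun B _ x _ y hpair hy => hy.of_erase (hpair.2 x (mem_insert_self x {y}))
  · exact fun B _ x _ _ y ⟨hyx, hy⟩ =>
      hy.mono (erase_subset x B) (mem_erase_of_ne_of_mem hyx hy.1)

end Maximal

/-- The domination relation revealed by the values of an attention filter on pairs: `x` dominates
`y` when `y` goes unnoticed in the menu `{x, y}`. For a choice correspondence the menu
`{x, x} = {x}` makes this irreflexive. -/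
def RevealedDom (Γ : Finset X → Finset X) (x y : X) : Prop :=
  y ∉ Γ {x, y}

namespace OptimalFilter

variable {Γ : Finset X → Finset X} {A B : Finset X} {x y : X}

lemma subset_insert_of_notMem (hΓ : OptimalFilter Γ) (hx : x ∉ Γ (insert x A)) :
    Γ A ⊆ Γ (insert x A) := by
  by_cases hxA : x ∈ A
  · rw [insert_eq_of_mem hxA]
  · simpa only [erase_insert hxA] using
      hΓ.2.1 (insert x A) (insert_nonempty x A) x (mem_insert_self x A) hx

lemma mem_insert_of_mem_pair (hΓ : OptimalFilter Γ) (hpair : y ∈ Γ {x, y}) (hy : y ∈ Γ A) :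
    y ∈ Γ (insert x A) := by
  by_cases hxA : x ∈ A
  · rwa [insert_eq_of_mem hxA]
  · exact hΓ.2.2.1 (insert x A) (insert_nonempty x A) x (mem_insert_self x A) y hpair
      (by rwa [erase_insert hxA])

lemma mem_of_mem_insert (hΓ : OptimalFilter Γ) (hyA : y ∈ A) (hy : y ∈ Γ (insert x A)) :
    y ∈ Γ A := by
  by_cases hxA : x ∈ A
  · rwa [insert_eq_of_mem hxA] at hy
  · have hyx : y ≠ x := ne_of_mem_of_not_mem hyA hxA
    have hsub := hΓ.2.2.2 (insert x A) (insert_nonempty x A) x (mem_insert_self x A)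
    rw [erase_insert hxA] at hsub
    exact hsub ⟨y, hyA⟩ (mem_erase_of_ne_of_mem hyx hy)

lemma mem_of_subset (hΓ : OptimalFilter Γ) (hAB : A ⊆ B) (hyA : y ∈ A) (hy : y ∈ Γ B) :
    y ∈ Γ A := by
  rw [← sdiff_union_of_subset hAB] at hy
  generalize B \ A = D at hy
  induction D using Finset.induction_on with
  | empty => rwa [empty_union] at hy
  | insert x D _ ih =>
    rw [insert_union] at hy
    exact ih (hΓ.mem_of_mem_insert (mem_union_right D hyA) hy)

lemma mem_insert_self_of_forall_mem_pair (hΓ : OptimalFilter Γ) (hy : ∀ x ∈ A, y ∈ Γ {x, y}) :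
    y ∈ Γ (insert y A) := by
  induction A using Finset.induction_on with
  | empty =>
    obtain ⟨hne, hsub⟩ := hΓ.1 {y} (singleton_nonempty y)
    simp [hne.subset_singleton_iff.mp hsub]
  | insert x A _ ih =>
    rw [forall_mem_insert] at hy
    rw [insert_comm]
    exact hΓ.mem_insert_of_mem_pair hy.1 (ih hy.2)

lemma mem_iff_maxOf (hΓ : OptimalFilter Γ) (hA : A.Nonempty) :
    y ∈ Γ A ↔ MaxOf (RevealedDom Γ) A y := by
  simp only [MaxOf, RevealedDom, not_not]
  constructor
  · intro hy
    have hyA : y ∈ A := (hΓ.1 A hA).2 hy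
    refine ⟨hyA, fun x hx => hΓ.mem_of_subset ?_ (by simp) hy⟩
    exact insert_subset hx (singleton_subset_iff.mpr hyA)
  · rintro ⟨hyA, hpairs⟩
    simpa only [insert_eq_of_mem hyA] using hΓ.mem_insert_self_of_forall_mem_pair hpairs

lemma asym_revealedDom (hΓ : OptimalFilter Γ) : Asym (RevealedDom Γ) := by
  intro x y hy hx
  obtain ⟨⟨z, hz⟩, hsub⟩ := hΓ.1 {x, y} (insert_nonempty x {y})
  obtain rfl | rfl : z = x ∨ z = y := by simpa using hsub hz
  · exact hx (pair_comm z y ▸ hz)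
  · exact hy hz

lemma strictPartial_revealedDom (hΓ : OptimalFilter Γ) : StrictPartial (RevealedDom Γ) := by
  refine ⟨hΓ.asym_revealedDom, fun x y z hxy hyz hz => ?_⟩
  have hy_ignored : y ∉ Γ {y, x, z} := fun hy => hxy (hΓ.mem_of_subset (by grind) (by simp) hy)
  have hz_noticed : z ∈ Γ {y, x, z} := hΓ.subset_insert_of_notMem hy_ignored hz
  exact hyz (hΓ.mem_of_subset (by grind) (by simp) hz_noticed)

end OptimalFilter

section Representation

variable {gt rhd : X → X → Prop} {c : Finset X → X} {Γ : Finset X → Finset X}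

lemma Describes.explByOLA_maxCorr (h : Describes gt rhd c) : ExplByOLA (maxCorr gt) rhd c := by
  obtain ⟨hgt, hrhd, hc⟩ := h
  exact ⟨hgt.optimalFilter_maxCorr, hrhd, by simpa only [mem_maxCorr] using hc⟩

lemma ExplByOLA.describes_revealedDom (h : ExplByOLA Γ rhd c) :
    Describes (RevealedDom Γ) rhd c := by
  obtain ⟨hΓ, hrhd, hc⟩ := h
  refine ⟨hΓ.strictPartial_revealedDom, hrhd, fun A hA => ?_⟩
  simpa only [hΓ.mem_iff_maxOf hA] using hc A hA

end Representation

theorem stmt_4_general (rhd : X → X → Prop) (c : Finset X → X) :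
    (∃ gt : X → X → Prop, Describes gt rhd c) ↔
      (∃ Γ : Finset X → Finset X, ExplByOLA Γ rhd c) :=
  ⟨fun ⟨gt, h⟩ => ⟨maxCorr gt, h.explByOLA_maxCorr⟩,
    fun ⟨Γ, h⟩ => ⟨RevealedDom Γ, h.describes_revealedDom⟩⟩

theorem stmt_4 [Fintype X] [Nonempty X] (rhd : X → X → Prop) (hrhd : StrictLinear rhd)
    (c : Finset X → X) (hc : ChoiceFun c) :
    (∃ gt : X → X → Prop, Describes gt rhd c) ↔
      (∃ Γ : Finset X → Finset X, ExplByOLA Γ rhd c) :=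
  stmt_4_general rhd c
end

section
/- For every choice with salient limited attention c on a finite nonempty set X, there exists an explanation by salient limited attention (Γ,▷) of c such that Γ is an attention filter, i.e., for all menus B and x ∈ B, x ∉ Γ(B) implies Γ(B) = Γ(B\{x}). -/
open Finset

variable {X : Type*} [DecidableEq X]

/-! Keep the order `▷` of the given explanation and enlarge attention as far as the choices allow,
to `Γ' B = {y ∈ B | ¬ y ▷ c B}`. Salience of the original filter matters only through its effect on
choice: deleting an element that is neither the `▷`-minimum of the menu nor chosen leaves the choice
unchanged, so it merely deletes that element from `Γ' B`. An element of `B` outside `Γ' B` lies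
strictly above `c B`, hence is of this kind, which makes `Γ'` an attention filter as well. -/

section Order

variable {α : Type*} {r : α → α → Prop} {P Q : α → Prop} {a b : α}

theorem Asym.irrefl (hr : Asym r) (x : α) : ¬ r x x := fun h => hr x x h h

theorem IsRMax.unique (hr : Asym r) (ha : IsRMax r P a) (hb : IsRMax r P b) : a = b := by
  by_contra hab
  exact hr a b (ha.2 b hb.1 (Ne.symm hab)) (hb.2 a ha.1 hab)

theorem IsRMax.mono (ha : IsRMax r P a) (hQP : ∀ y, Q y → P y) (hQ : Q a) : IsRMax r Q a :=
  ⟨hQ, fun y hy => ha.2 y (hQP y hy)⟩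

end Order

section LowerContour

variable {α : Type*} {r : α → α → Prop} {A : Finset α} {a x y : α}

open Classical in
/-- The lower contour set of `a` in the menu `A`: the alternatives of `A` that `r` does not rank
above `a`. -/
noncomputable def lowerContour (r : α → α → Prop) (A : Finset α) (a : α) : Finset α :=
  {y ∈ A | ¬ r y a}

theorem mem_lowerContour : y ∈ lowerContour r A a ↔ y ∈ A ∧ ¬ r y a := by
  simp only [lowerContour, mem_filter]

theorem lowerContour_subset : lowerContour r A a ⊆ A := fun _ hy =>
  (mem_lowerContour.1 hy).1

theorem lowerContour_erase [DecidableEq α] :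
    lowerContour r (A.erase x) a = (lowerContour r A a).erase x := by
  ext y
  simp only [mem_lowerContour, mem_erase, and_assoc]

theorem isRMax_lowerContour (hr : StrictLinear r) (ha : a ∈ A) :
    IsRMax r (· ∈ lowerContour r A a) a :=
  ⟨mem_lowerContour.2 ⟨ha, hr.1.1.irrefl a⟩, fun y hy hya =>
    (hr.2 y a hya).resolve_left (mem_lowerContour.1 hy).2⟩

end LowerContour

section Choice

variable {c : Finset X → X} {Γ : Finset X → Finset X} {rhd : X → X → Prop}

/-- The behavioral content of salient limited attention: removing an alternative that is neither
chosen nor the `rhd`-minimum of the menu does not affect the choice. -/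
def ErasureInvariant (rhd : X → X → Prop) (c : Finset X → X) : Prop :=
  ∀ ⦃B : Finset X⦄ ⦃x : X⦄, x ∈ B → ¬ IsRMin rhd (· ∈ B) x → x ≠ c B → c (B.erase x) = c B

theorem ExplBySLA.choiceFun (h : ExplBySLA Γ rhd c) : ChoiceFun c := fun A hA =>
  (h.2.1.1 A hA).2 (h.2.2 A hA).1

theorem ExplBySLA.erasureInvariant (h : ExplBySLA Γ rhd c) : ErasureInvariant rhd c := by
  intro B x hx hmin hne
  have hB : B.Nonempty := ⟨x, hx⟩
  have hB' : (B.erase x).Nonempty := ⟨c B, mem_erase.2 ⟨hne.symm, h.choiceFun B hB⟩⟩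
  obtain ⟨⟨⟨hasym, -⟩, -⟩, ⟨-, hsalient⟩, hmax⟩ := h
  have hΓ : (Γ B).erase x = Γ (B.erase x) :=
    hsalient B hB x hx hmin fun hxmax => hne (hxmax.unique hasym (hmax B hB))
  have hcB : IsRMax rhd (· ∈ Γ (B.erase x)) (c B) :=
    (hmax B hB).mono (fun y hy => erase_subset x _ (hΓ ▸ hy))
      (hΓ ▸ mem_erase.2 ⟨hne.symm, (hmax B hB).1⟩)
  exact (hmax _ hB').unique hasym hcB

/-- The candidate attention filter: at each menu, all alternatives not ranked above the choice. -/
noncomputable def lowerContourFilter (rhd : X → X → Prop) (c : Finset X → X) (B : Finset X) :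
    Finset X :=
  lowerContour rhd B (c B)

theorem ErasureInvariant.lowerContourFilter_erase (hinv : ErasureInvariant rhd c) {B : Finset X}
    {x : X} (hx : x ∈ B) (hmin : ¬ IsRMin rhd (· ∈ B) x) (hne : x ≠ c B) :
    lowerContourFilter rhd c (B.erase x) = (lowerContourFilter rhd c B).erase x := by
  rw [lowerContourFilter, hinv hx hmin hne, lowerContour_erase, lowerContourFilter]

theorem ErasureInvariant.explBySLA (hinv : ErasureInvariant rhd c) (hrhd : StrictLinear rhd)
    (hc : ChoiceFun c) : ExplBySLA (lowerContourFilter rhd c) rhd c := by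
  have hmax : ∀ A : Finset X, A.Nonempty → IsRMax rhd (· ∈ lowerContourFilter rhd c A) (c A) :=
    fun A hA => isRMax_lowerContour hrhd (hc A hA)
  refine ⟨hrhd, ⟨fun A hA => ⟨⟨c A, (hmax A hA).1⟩, lowerContour_subset⟩, ?_⟩, hmax⟩
  intro B hB x hx hmin hxmax
  have hne : x ≠ c B := fun hxc => hxmax (hxc ▸ hmax B hB)
  exact (hinv.lowerContourFilter_erase hx hmin hne).symm

theorem ErasureInvariant.lowerContourFilter_eq_erase_of_notMem (hinv : ErasureInvariant rhd c)
    (hrhd : Asym rhd) (hc : ChoiceFun c) {B : Finset X} {x : X} (hx : x ∈ B)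
    (hxΓ : x ∉ lowerContourFilter rhd c B) :
    lowerContourFilter rhd c B = lowerContourFilter rhd c (B.erase x) := by
  have habove : rhd x (c B) := by
    by_contra hnot
    exact hxΓ (mem_lowerContour.2 ⟨hx, hnot⟩)
  have hne : x ≠ c B := fun hxc => hrhd.irrefl x (hxc ▸ habove)
  have hmin : ¬ IsRMin rhd (· ∈ B) x := fun hxmin =>
    hrhd x (c B) habove (hxmin.2 (c B) (hc B ⟨x, hx⟩) hne.symm)
  rw [hinv.lowerContourFilter_erase hx hmin hne, erase_eq_of_notMem hxΓ]

theorem stmt_5_general (h : ExplBySLA Γ rhd c) :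
    ∃ Γ' : Finset X → Finset X, ExplBySLA Γ' rhd c ∧
      ∀ B : Finset X, B.Nonempty → ∀ x ∈ B, x ∉ Γ' B → Γ' B = Γ' (B.erase x) :=
  ⟨lowerContourFilter rhd c, h.erasureInvariant.explBySLA h.1 h.choiceFun, fun _ _ _ hx hxΓ =>
    h.erasureInvariant.lowerContourFilter_eq_erase_of_notMem h.1.1.1 h.choiceFun hx hxΓ⟩

end Choice

theorem stmt_5 [Fintype X] [Nonempty X] (c : Finset X → X) (hc : ChoiceFun c)
    (hCSLA : CSLA c) :
    ∃ (Γ : Finset X → Finset X) (rhd : X → X → Prop), ExplBySLA Γ rhd c ∧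
      ∀ B : Finset X, B.Nonempty → ∀ x ∈ B, x ∉ Γ B → Γ B = Γ (B.erase x) := by
  obtain ⟨Γ, rhd, h⟩ := hCSLA
  exact (stmt_5_general h).imp fun _ hΓ' => ⟨rhd, hΓ'⟩
end

section
/- Let c be a choice with salient limited attention on a finite nonempty set X, and suppose there exist a menu A and x ∈ A such that x ≠ c(A) and c(A) ≠ c(A\{x}). Then for every general-temptation representation (u,v,W) of c: v(x) = max_{y∈A} v(y), and either u(c(A)) > u(c(A\{x})) and v(c(A)) < v(c(A\{x})), or u(c(A)) < u(c(A\{x})) and v(c(A)) > v(c(A\{x})). -/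
/-!
A menu enters the ranking of its alternatives only through its maximal temptation. If `c B ≠ c A`
are both available in the menus `B ⊆ A`, the two menus rank them oppositely, so the maximal
temptation is strictly smaller on `B`; for `B = A.erase x` this forces `x` to attain the maximum
on `A`. An alternative at least as good in both `u` and `v` would be ranked weakly higher at every
value of the maximum, since `W` is increasing, so `u` and `v` must order `c A` and `c B` oppositely.
-/

open Finset

variable {X : Type*} [DecidableEq X]

theorem incompRel_le_prodMk_iff {α β : Type*} [LinearOrder α] [LinearOrder β] {a₁ a₂ : α}
    {b₁ b₂ : β} :
    IncompRel (· ≤ ·) (a₁, b₁) (a₂, b₂) ↔ a₁ < a₂ ∧ b₂ < b₁ ∨ a₂ < a₁ ∧ b₁ < b₂ := by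
  simp only [IncompRel, Prod.mk_le_mk, not_and_or, not_le]
  grind

theorem apply_eq_sup'_of_sup'_erase_lt {α : Type*} [LinearOrder α] {A : Finset X} {x : X}
    {f : X → α} (hA : A.Nonempty) (hB : (A.erase x).Nonempty)
    (hlt : (A.erase x).sup' hB f < A.sup' hA f) : f x = A.sup' hA f := by
  obtain ⟨m, hm, hmax⟩ := exists_mem_eq_sup' hA f
  obtain rfl : m = x := by
    by_contra hmx
    exact (le_sup' f (mem_erase.2 ⟨hmx, hm⟩)).not_gt (hmax ▸ hlt)
  exact hmax.symm

theorem switch_erase {c : Finset X → X} {A : Finset X} {x : X} (hmem : c A ∈ A)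
    (hx : x ≠ c A) (hne : c A ≠ c (A.erase x)) : Switch c (A.erase x) A :=
  have hmem_erase : c A ∈ A.erase x := mem_erase.2 ⟨hx.symm, hmem⟩
  ⟨⟨c A, hmem_erase⟩, erase_subset x A, hmem_erase, hne.symm⟩

namespace GTRrep

variable {Y : Type*} {c : Finset Y → Y} {u v : Y → ℝ} {W : ℝ → ℝ → ℝ} {A B : Finset Y} {x : Y}

theorem monotone_uncurry (h : GTRrep c u v W) : Monotone (Function.uncurry W) := by
  obtain ⟨-, hleft, hright, -⟩ := h
  exact monotone_prod_iff.2 ⟨fun r => StrictMono.monotone fun _ _ => hright r _ _,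
    fun s => StrictMono.monotone fun _ _ => hleft _ _ s⟩

theorem choice_mem (h : GTRrep c u v W) (hA : A.Nonempty) : c A ∈ A :=
  (h.2.2.2 A hA).1

theorem lt_choice (h : GTRrep c u v W) (hA : A.Nonempty) (hx : x ∈ A) (hne : x ≠ c A) :
    W (u x) (v x - A.sup' hA v) < W (u (c A)) (v (c A) - A.sup' hA v) :=
  (h.2.2.2 A hA).2 x hx hne

theorem not_choice_le (h : GTRrep c u v W) (hA : A.Nonempty) (hx : x ∈ A) (hne : x ≠ c A) :
    ¬ (u (c A), v (c A)) ≤ (u x, v x) := fun ⟨hu, hv⟩ =>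
  (h.lt_choice hA hx hne).not_ge <|
    h.monotone_uncurry (Prod.mk_le_mk.2 ⟨hu, sub_le_sub_right hv (A.sup' hA v)⟩)

theorem sup'_lt_sup'_of_switch (h : GTRrep c u v W) (hBA : Switch c B A) :
    B.sup' hBA.1 v < A.sup' (hBA.1.mono hBA.2.1) v := by
  obtain ⟨hB, hsub, hmem, hne⟩ := hBA
  refine (sup'_mono v hsub hB).lt_of_ne fun hsup => ?_
  have hrankA := h.lt_choice (hB.mono hsub) (hsub (h.choice_mem hB)) hne
  have hrankB := h.lt_choice hB hmem hne.symm
  rw [hsup] at hrankB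
  exact lt_asymm hrankA hrankB

theorem incompRel_of_switch (h : GTRrep c u v W) (hBA : Switch c B A) :
    IncompRel (· ≤ ·) (u (c B), v (c B)) (u (c A), v (c A)) := by
  obtain ⟨hB, hsub, hmem, hne⟩ := hBA
  exact ⟨h.not_choice_le hB hmem hne.symm,
    h.not_choice_le (hB.mono hsub) (hsub (h.choice_mem hB)) hne⟩

end GTRrep

theorem stmt_8_general (c : Finset X → X) (A : Finset X) (x : X) (hx : x ∈ A)
    (h1 : x ≠ c A) (h2 : c A ≠ c (A.erase x)) (u v : X → ℝ) (W : ℝ → ℝ → ℝ)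
    (h : GTRrep c u v W) :
    v x = A.sup' ⟨x, hx⟩ v ∧
      ((u (c A) > u (c (A.erase x)) ∧ v (c A) < v (c (A.erase x))) ∨
       (u (c A) < u (c (A.erase x)) ∧ v (c A) > v (c (A.erase x)))) := by
  have hswitch : Switch c (A.erase x) A := switch_erase (h.choice_mem ⟨x, hx⟩) h1 h2
  exact ⟨apply_eq_sup'_of_sup'_erase_lt _ hswitch.1 (h.sup'_lt_sup'_of_switch hswitch),
    incompRel_le_prodMk_iff.1 (h.incompRel_of_switch hswitch)⟩

theorem stmt_8 [Fintype X] [Nonempty X] (c : Finset X → X) (hc : ChoiceFun c)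
    (hCSLA : CSLA c) (A : Finset X) (hA : A.Nonempty) (x : X) (hx : x ∈ A)
    (h1 : x ≠ c A) (h2 : c A ≠ c (A.erase x)) :
    ∀ (u v : X → ℝ) (W : ℝ → ℝ → ℝ), GTRrep c u v W →
      v x = A.sup' hA v ∧
        ((u (c A) > u (c (A.erase x)) ∧ v (c A) < v (c (A.erase x))) ∨
         (u (c A) < u (c (A.erase x)) ∧ v (c A) > v (c (A.erase x)))) := by
  exact stmt_8_general c A x hx h1 h2
end

section
/- Let c be a choice with competitive limited attention on a finite nonempty set X, and suppose there exist a menu A and x,y ∈ A such that either x = c({x,y}) = c(A\{y}) ≠ c(A) = y, or y = c({x,y}) ≠ c(A\{y}) = c(A) = x. Then x f y for every list f that list rationalizes c; moreover, for every explanation by competitive limited attention (Γ,▷) of c there is z ∈ A\{y} with z ▷ y. -/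
/-!
Relative to a list `f`, the choice from a menu `A` depends only on the elements up to any point of
the list beyond which nothing is chosen. Hence, if neither `c A` nor `c (A \ {y})` comes after `y`,
truncating `A` at `y` makes `y` last without affecting either choice, and list rationality gives
`c A = c {c (A \ {y}), y}`. Each of the two patterns of the theorem violates this equation, so `y`
cannot come after `x`. Explanations obey the same conclusion, because the order `▷` of any
explanation by competitive limited attention is itself a list that rationalizes `c`; thus `x ▷ y`.
-/

open Finset

variable {X : Type*} [DecidableEq X]

lemma StrictLinear.exists_isRMax {α : Type*} {r : α → α → Prop} (hr : StrictLinear r)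
    {A : Finset α} (hA : A.Nonempty) : ∃ l, IsRMax r (· ∈ A) l := by
  have : IsStrictOrder α r :=
    { irrefl := fun a ha => hr.1.1 a a ha ha
      trans := hr.1.2 }
  have hwf : (A : Set α).WellFoundedOn r := A.finite_toSet.wellFoundedOn
  obtain ⟨a, ha⟩ := hA
  obtain ⟨⟨l, hl⟩, -, hmin⟩ := hwf.has_min Set.univ ⟨⟨a, ha⟩, trivial⟩
  exact ⟨l, hl, fun z hz hzl => (hr.2 l z hzl.symm).resolve_right (hmin ⟨z, hz⟩ trivial)⟩

/-- `B` consists of the first elements of the menu `A` in the list `f`, where `f z w` means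
that `z` comes after `w`. -/
def IsInitialSegment {α : Type*} (f : α → α → Prop) (B A : Finset α) : Prop :=
  B ⊆ A ∧ ∀ z ∈ A, z ∉ B → ∀ w ∈ B, f z w

lemma IsInitialSegment.erase {f : X → X → Prop} {A B : Finset X} (h : IsInitialSegment f B A)
    (y : X) : IsInitialSegment f (B.erase y) (A.erase y) := by
  refine ⟨erase_subset_erase y h.1, fun z hz hzB w hw => ?_⟩
  obtain ⟨hzy, hzA⟩ := mem_erase.1 hz
  exact h.2 z hzA (fun hzB' => hzB (mem_erase.2 ⟨hzy, hzB'⟩)) w (mem_of_mem_erase hw)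

lemma StrictLinear.isInitialSegment_filter {α : Type*} {f : α → α → Prop} (hf : StrictLinear f)
    (A : Finset α) (y : α) [DecidablePred fun z => z = y ∨ f y z] :
    IsInitialSegment f {z ∈ A | z = y ∨ f y z} A := by
  refine ⟨filter_subset _ _, fun z hzA hzB w hwB => ?_⟩
  obtain ⟨hzy, hyz⟩ := not_or.1 fun h => hzB (mem_filter.2 ⟨hzA, h⟩)
  have hfzy : f z y := (hf.2 z y hzy).resolve_right hyz
  obtain rfl | hyw := (mem_filter.1 hwB).2
  · exact hfzy
  · exact hf.1.2 z y w hfzy hyw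

namespace ListRationalizes

variable {f : X → X → Prop} {c : Finset X → X} {A B : Finset X} {l y : X}

lemma choice_erase_of_isRMax (hf : ListRationalizes f c) (hc : ChoiceFun c)
    (hl : IsRMax f (· ∈ A) l) (hne : c A ≠ l) : c (A.erase l) = c A := by
  have hcard : 1 < A.card := one_lt_card.2 ⟨c A, hc A ⟨l, hl.1⟩, l, hl.1, hne⟩
  have hpair : c A ∈ ({c (A.erase l), l} : Finset X) := by
    rw [hf.2 A hcard l hl]
    exact hc _ (insert_nonempty _ _)
  exact ((mem_insert.1 hpair).resolve_right (hne <| mem_singleton.1 ·)).symm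

lemma choice_eq_of_isInitialSegment (hf : ListRationalizes f c) (hc : ChoiceFun c)
    (hBA : IsInitialSegment f B A) (hB : c A ∈ B) : c B = c A := by
  induction A using Finset.strongInduction with
  | H A ih =>
    obtain rfl | hssub := hBA.1.eq_or_ssubset
    · rfl
    obtain ⟨l, hl, hlast⟩ := hf.1.exists_isRMax (sdiff_nonempty.2 hssub.2)
    obtain ⟨hlA, hlB⟩ := mem_sdiff.1 hl
    have hlA_max : IsRMax f (· ∈ A) l := by
      refine ⟨hlA, fun w hwA hwl => ?_⟩
      by_cases hwB : w ∈ B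
      · exact hBA.2 l hlA hlB w hwB
      · exact hlast w (mem_sdiff.2 ⟨hwA, hwB⟩) hwl
    have hBA_erase : IsInitialSegment f B (A.erase l) := by
      simpa only [erase_eq_of_notMem hlB] using hBA.erase l
    have herase : c (A.erase l) = c A :=
      hf.choice_erase_of_isRMax hc hlA_max (ne_of_mem_of_not_mem hB hlB)
    calc
      c B = c (A.erase l) := ih (A.erase l) (erase_ssubset hlA) hBA_erase (herase ▸ hB)
      _ = c A := herase

lemma choice_eq_choice_pair (hf : ListRationalizes f c) (hc : ChoiceFun c) (hy : y ∈ A)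
    (hA : c A = y ∨ f y (c A)) (hne : (A.erase y).Nonempty) (herase : f y (c (A.erase y))) :
    c A = c {c (A.erase y), y} := by
  classical
  let B := {z ∈ A | z = y ∨ f y z}
  have hBA : IsInitialSegment f B A := hf.1.isInitialSegment_filter A y
  have hyB : y ∈ B := mem_filter.2 ⟨hy, .inl rfl⟩
  have hchosen : c (A.erase y) ∈ B.erase y := by
    obtain ⟨hxy, hxA⟩ := mem_erase.1 (hc _ hne)
    exact mem_erase.2 ⟨hxy, mem_filter.2 ⟨hxA, .inr herase⟩⟩
  have hcard : 1 < B.card :=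
    one_lt_card.2 ⟨_, mem_of_mem_erase hchosen, y, hyB, ne_of_mem_erase hchosen⟩
  have hlast : IsRMax f (· ∈ B) y := ⟨hyB, fun z hz => (mem_filter.1 hz).2.resolve_left⟩
  calc
    c A = c B :=
      (hf.choice_eq_of_isInitialSegment hc hBA (mem_filter.2 ⟨hc A ⟨y, hy⟩, hA⟩)).symm
    _ = c {c (B.erase y), y} := hf.2 B hcard y hlast
    _ = c {c (A.erase y), y} := by
      rw [hf.choice_eq_of_isInitialSegment hc (hBA.erase y) hchosen]

lemma choice_erase_follows (hf : ListRationalizes f c) (hc : ChoiceFun c) (hy : y ∈ A)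
    (hne : (A.erase y).Nonempty) (hA : c A = c (A.erase y) ∨ c A = y)
    (hpair : c A ≠ c {c (A.erase y), y}) : f (c (A.erase y)) y := by
  by_contra hnot
  have hlt : f y (c (A.erase y)) :=
    (hf.1.2 _ y (ne_of_mem_erase (hc _ hne))).resolve_left hnot
  have hcA : c A = y ∨ f y (c A) := hA.symm.imp_right fun h => by rwa [h]
  exact hpair (hf.choice_eq_choice_pair hc hy hcA hne hlt)

end ListRationalizes

namespace ExplByCCLA

variable {Γ : Finset X → Finset X} {rhd : X → X → Prop} {c : Finset X → X} {A : Finset X} {y : X}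

lemma choiceFun (h : ExplByCCLA Γ rhd c) : ChoiceFun c :=
  fun A hA => (h.2.1.1 A hA).2 (h.2.2 A hA).1

lemma choice_eq_of_isRMax (h : ExplByCCLA Γ rhd c) (hy : IsRMax rhd (· ∈ A) y) (hyΓ : y ∈ Γ A) :
    c A = y := by
  by_contra hne
  have hA : A.Nonempty := ⟨y, hy.1⟩
  exact h.1.1.1 _ _ (hy.2 _ (h.choiceFun _ hA) hne) ((h.2.2 A hA).2 y hyΓ (Ne.symm hne))

lemma choice_erase_of_notMem (h : ExplByCCLA Γ rhd c) (hy : y ∈ A) (hyΓ : y ∉ Γ A) :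
    c (A.erase y) = c A := by
  have hmax := h.2.2 A ⟨y, hy⟩
  have hcy : c A ≠ y := ne_of_mem_of_not_mem hmax.1 hyΓ
  have hmax_erase := h.2.2 (A.erase y) ⟨c A, mem_erase.2 ⟨hcy, h.choiceFun _ ⟨y, hy⟩⟩⟩
  rw [← h.2.1.2.1 A ⟨y, hy⟩ y hy hyΓ] at hmax_erase
  by_contra hne
  exact h.1.1.1 _ _ (hmax_erase.2 _ hmax.1 (Ne.symm hne)) (hmax.2 _ hmax_erase.1 hne)

theorem listRationalizes (h : ExplByCCLA Γ rhd c) : ListRationalizes rhd c := by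
  refine ⟨h.1, fun A hcard y hy => ?_⟩
  set x := c (A.erase y) with hx
  have hne : (A.erase y).Nonempty := (erase_nonempty hy.1).2 (one_lt_card_iff_nontrivial.1 hcard)
  obtain ⟨hxy, hxA⟩ := mem_erase.1 (h.choiceFun _ hne)
  have hy_pair : IsRMax rhd (· ∈ ({x, y} : Finset X)) y := by
    refine ⟨by simp, fun z hz hzy => ?_⟩
    obtain rfl : z = x := (mem_insert.1 hz).resolve_right (hzy <| mem_singleton.1 ·)
    exact hy.2 _ hxA hxy
  have hcomp : y ∈ Γ {x, y} ↔ y ∈ Γ A := h.2.1.2.2 A hcard x y hy (h.2.2 _ hne)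
  by_cases hyΓ : y ∈ Γ A
  · rw [h.choice_eq_of_isRMax hy hyΓ, h.choice_eq_of_isRMax hy_pair (hcomp.2 hyΓ)]
  · have hpair : c {x, y} = x := by
      have hmax := h.2.2 {x, y} ⟨y, hy_pair.1⟩
      have hcy : c {x, y} ≠ y := ne_of_mem_of_not_mem hmax.1 (hcomp.not.2 hyΓ)
      exact (mem_insert.1 (h.choiceFun _ ⟨y, hy_pair.1⟩)).resolve_right (hcy <| mem_singleton.1 ·)
    rw [hpair, hx, h.choice_erase_of_notMem hy.1 hyΓ]

end ExplByCCLA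

theorem stmt_13_general (c : Finset X → X) (hc : ChoiceFun c) (A : Finset X) (x y : X)
    (hx : x ∈ A) (hy : y ∈ A)
    (hcase : (c {x, y} = x ∧ c (A.erase y) = x ∧ c A = y ∧ x ≠ y) ∨
             (c {x, y} = y ∧ c (A.erase y) = x ∧ c A = x ∧ y ≠ x)) :
    (∀ f : X → X → Prop, ListRationalizes f c → f x y) ∧
    (∀ (Γ : Finset X → Finset X) (rhd : X → X → Prop), ExplByCCLA Γ rhd c → rhd x y) := by
  obtain rfl : c (A.erase y) = x := by grind
  have hne : (A.erase y).Nonempty := ⟨_, mem_erase.2 ⟨by grind, hx⟩⟩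
  have hcA : c A = c (A.erase y) ∨ c A = y := by grind
  have hpair : c A ≠ c {c (A.erase y), y} := by grind
  have hlist : ∀ f : X → X → Prop, ListRationalizes f c → f (c (A.erase y)) y :=
    fun _ hf => hf.choice_erase_follows hc hy hne hcA hpair
  exact ⟨hlist, fun _ rhd hE => hlist rhd hE.listRationalizes⟩

theorem stmt_13 [Fintype X] [Nonempty X] (c : Finset X → X) (hc : ChoiceFun c)
    (hCCLA : CCLA c) (A : Finset X) (hA : A.Nonempty) (x y : X)
    (hx : x ∈ A) (hy : y ∈ A)
    (hcase : (c {x, y} = x ∧ c (A.erase y) = x ∧ c A = y ∧ x ≠ y) ∨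
             (c {x, y} = y ∧ c (A.erase y) = x ∧ c A = x ∧ y ≠ x)) :
    (∀ f : X → X → Prop, ListRationalizes f c → f x y) ∧
    (∀ (Γ : Finset X → Finset X) (rhd : X → X → Prop), ExplByCCLA Γ rhd c →
      ∃ z ∈ A.erase y, rhd z y) := by
  obtain ⟨hlist, hexpl⟩ := stmt_13_general c hc A x y hx hy hcase
  exact ⟨hlist, fun Γ rhd hE => ⟨x, by grind, hexpl Γ rhd hE⟩⟩
end
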